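/- Suppose that for some p ≥ 0 the derivative H_p' exists everywhere on [0,1] and is bounded. Then for every n ≥ p the derivative H_n' exists everywhere on [0,1], is bounded, and satisfies H_{n+1}'(x) = Σ_{(i,ε)} (1/(i+εx)²) · H_n'(1/(i+εx)) for all x ∈ [0,1], where the sum runs over all pairs (i,ε) with i an odd positive integer, ε ∈ {−1,1}, and i + ε > 1. -/

import Mathlib

open Real MeasureTheory Filter Set
open scoped ENNReal NNReal Classical

namespace OCF

/-- The golden ratio `G = (1+√5)/2`. -/
noncomputable def G : ℝ := (1 + Real.sqrt 5) / 2

/-- `g = (√5-1)/2`. -/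
noncomputable def gg : ℝ := (Real.sqrt 5 - 1) / 2

/-- The odd Gauss map. -/
noncomputable def T (x : ℝ) : ℝ :=
  if x = 0 then 0
  else if Odd ⌊1 / x⌋ then Int.fract (1 / x) else 1 - Int.fract (1 / x)

/-- `eps x n` is `ε_n(x)`; by convention `ε_0(x) = 1`. -/
noncomputable def eps (x : ℝ) : ℕ → ℤ
  | 0 => 1
  | n + 1 => if Odd ⌊1 / (T^[n] x)⌋ then 1 else -1

/-- `a x n` is the `n`-th odd partial quotient `a_n(x)` (for `n ≥ 1`). -/
noncomputable def a (x : ℝ) : ℕ → ℤ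
  | 0 => 1
  | n + 1 => if Odd ⌊1 / (T^[n] x)⌋ then ⌊1 / (T^[n] x)⌋ else 1 + ⌊1 / (T^[n] x)⌋

/-- `r x n = r_n(x) = a_n(x) + ε_n(x) Tⁿ(x)` for `n ≥ 1`. -/
noncomputable def r (x : ℝ) (n : ℕ) : ℝ := (a x n : ℝ) + (eps x n : ℝ) * T^[n] x

/-- The distribution functions: `H μ 0 x = μ([0,x])` and, for `n ≥ 1`,
`H μ n x = μ({y ∈ (0,1) : y irrational, 1/r_{n+1}(y) < x})`. -/
noncomputable def H (μ : Measure ℝ) : ℕ → ℝ → ℝ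
  | 0 => fun x => (μ (Set.Icc 0 x)).toReal
  | n + 1 => fun x =>
      (μ {y | y ∈ Set.Ioo (0 : ℝ) 1 ∧ Irrational y ∧ 1 / r y (n + 2) < x}).toReal

/-- `h μ n x = H_n'(x) / ((x+G-1)⁻¹ - (x-G-1)⁻¹)`, the derivative being taken within `[0,1]`. -/
noncomputable def h (μ : Measure ℝ) (n : ℕ) (x : ℝ) : ℝ :=
  derivWithin (H μ n) (Set.Icc 0 1) x / ((x + G - 1)⁻¹ - (x - G - 1)⁻¹)

/-- `η = 4g Σ_{i odd} 1/((G+i) i (i+2))`. -/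
noncomputable def eta : ℝ :=
  4 * gg * ∑' m : ℕ, 1 / ((G + (2 * (m : ℝ) + 1)) * (2 * (m : ℝ) + 1) * (2 * (m : ℝ) + 3))

end OCF

open OCF

/-!
Write `ν_n` for the law of `Tⁿ` under `μ` restricted to the irrationals of `(0, 1)`. Since
`1 / r_{n+1} = Tⁿ` there, `H_n` is the distribution function of `ν_n`, up to an additive constant if
`n = 0`. On irrationals `T z` is the distance from `1 / z` to the nearest odd integer, so `{T < x}`
is a disjoint union of intervals between the points `1 / i` and `1 / (i ± x)`, `i` odd. Hence
`H_{n+1}` is a series of increments of `H_n`, provided that the endpoints carry no mass; the latter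
is forced by the continuity of `H_n`. If `H_n'` exists and is bounded, the differentiated series is
dominated by a constant multiple of `∑ 1 / (m + 1)²`, so differentiation term by term is legitimate
and again produces a bounded derivative.
-/

open scoped Topology

namespace OCF

section GeneralLemmas

theorem hasDerivWithinAt_of_hasSum {ι 𝕜 E : Type*} [RCLike 𝕜] [NormedAddCommGroup E]
    [NormedSpace 𝕜 E] [CompleteSpace E] {f f' : ι → 𝕜 → E} {F : 𝕜 → E} {s : Set 𝕜} {u : ι → ℝ}
    {x : 𝕜} (hs : Convex ℝ s) (hu : Summable u)
    (hf : ∀ i, ∀ y ∈ s, HasDerivWithinAt (f i) (f' i y) s y)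
    (hf' : ∀ i, ∀ y ∈ s, ‖f' i y‖ ≤ u i) (hF : ∀ y ∈ s, HasSum (fun i => f i y) (F y))
    (hx : x ∈ s) : HasDerivWithinAt F (∑' i, f' i x) s x := by
  have slope_le : ∀ i, ∀ y ∈ s \ {x}, ‖slope (f i) x y‖ ≤ u i := by
    intro i y hy
    have hyx : 0 < ‖y - x‖ := norm_pos_iff.2 (sub_ne_zero.2 hy.2)
    rw [slope, vsub_eq_sub, norm_smul, norm_inv, inv_mul_le_iff₀ hyx, mul_comm]
    exact hs.norm_image_sub_le_of_norm_hasDerivWithin_le (hf i) (hf' i) hx hy.1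
  have tsum_slope : ∀ y ∈ s \ {x}, ∑' i, slope (f i) x y = slope F x y := fun y hy =>
    (((hF y hy.1).sub (hF x hx)).const_smul (y - x)⁻¹).tsum_eq
  rw [hasDerivWithinAt_iff_tendsto_slope]
  refine (tendsto_tsum_of_dominated_convergence hu
    (fun i => hasDerivWithinAt_iff_tendsto_slope.1 (hf i x hx)) ?_).congr' ?_
  · filter_upwards [self_mem_nhdsWithin] with y hy i using slope_le i y hy
  · filter_upwards [self_mem_nhdsWithin] with y hy using tsum_slope y hy

theorem hasDerivWithinAt_comp_one_div {𝕜 : Type*} [NontriviallyNormedField 𝕜] {F u : 𝕜 → 𝕜}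
    {F' u' y : 𝕜} {s t : Set 𝕜} (hF : HasDerivWithinAt F F' t (1 / u y))
    (hu : HasDerivWithinAt u u' s y) (hy : u y ≠ 0) (hst : MapsTo (fun x => 1 / u x) s t) :
    HasDerivWithinAt (fun x => F (1 / u x)) (-u' * (1 / u y ^ 2 * F')) s y := by
  have h_one_div : HasDerivWithinAt (fun x => 1 / u x) (-u' / u y ^ 2) s y := by
    simpa only [one_div] using hu.fun_inv hy
  exact (hF.comp y h_one_div hst).congr_deriv (by ring)

theorem mem_Ioo_one_div_iff {K : Type*} [Field K] [LinearOrder K] [IsStrictOrderedRing K]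
    {b c z : K} (hb : 0 < b) (hc : 0 < c) (hz : 0 < z) :
    z ∈ Ioo (1 / c) (1 / b) ↔ 1 / z ∈ Ioo b c := by
  rw [mem_Ioo, mem_Ioo, one_div_lt hc hz, lt_one_div hz hb, and_comm]

theorem one_div_mem_Icc_zero_one {K : Type*} [Field K] [LinearOrder K] [IsStrictOrderedRing K]
    {t : K} (ht : 1 ≤ t) : 1 / t ∈ Icc (0 : K) 1 :=
  ⟨by positivity, div_le_one_of_le₀ ht (by positivity)⟩

theorem hasSum_measureReal_iUnion {α ι : Type*} [MeasurableSpace α] [Countable ι] {ν : Measure α}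
    [IsFiniteMeasure ν] {s : ι → Set α} (hs : ∀ i, MeasurableSet (s i))
    (hd : Pairwise (Function.onFun Disjoint s)) :
    HasSum (fun i => ν.real (s i)) (ν.real (⋃ i, s i)) := by
  have hν := measure_iUnion hd hs (μ := ν)
  have h_ne_top : ∑' i, ν (s i) ≠ ∞ := hν ▸ measure_ne_top ν _
  rw [Measure.real, hν, ENNReal.tsum_toReal_eq fun i => measure_ne_top ν (s i)]
  exact ENNReal.hasSum_toReal h_ne_top

variable {α : Type*} [LinearOrder α] [TopologicalSpace α] [OrderClosedTopology α]
  [MeasurableSpace α] [OpensMeasurableSpace α] {ν : Measure α} [IsFiniteMeasure ν] {b c : α}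

theorem measureReal_Ico_eq_sub (hbc : b ≤ c) :
    ν.real (Ico b c) = ν.real (Iio c) - ν.real (Iio b) := by
  rw [← measureReal_sdiff (Iio_subset_Iio hbc) measurableSet_Iio, Iio_sdiff_Iio]

theorem measureReal_Ioc_eq_sub {d : α} (hdb : d ≤ b) (hbc : b ≤ c) :
    ν.real (Ioc b c) = ν.real (Icc d c) - ν.real (Icc d b) := by
  rw [eq_sub_iff_add_eq', ← measureReal_union _ measurableSet_Ioc, Icc_union_Ioc_eq_Icc hdb hbc]
  exact disjoint_left.2 fun z hz hz' => hz.2.not_gt hz'.1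

theorem measure_singleton_eq_zero_of_tendsto_Iio [(𝓝[>] c).NeBot]
    (h : Tendsto (fun x => ν.real (Iio x)) (𝓝[>] c) (𝓝 (ν.real (Iio c)))) : ν {c} = 0 := by
  have h_sub : Tendsto (fun x => ν.real (Iio x) - ν.real (Iio c)) (𝓝[>] c) (𝓝 0) := by
    simpa only [sub_self] using h.sub_const (ν.real (Iio c))
  refine (measureReal_eq_zero_iff).1 (le_antisymm (ge_of_tendsto h_sub ?_) measureReal_nonneg)
  filter_upwards [self_mem_nhdsWithin] with x (hx : c < x)
  rw [← measureReal_Ico_eq_sub hx.le]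
  exact measureReal_mono (singleton_subset_iff.2 ⟨le_rfl, hx⟩)

theorem measure_singleton_eq_zero_of_tendsto_Icc [(𝓝[<] c).NeBot] (hbc : b < c)
    (h : Tendsto (fun x => ν.real (Icc b x)) (𝓝[<] c) (𝓝 (ν.real (Icc b c)))) : ν {c} = 0 := by
  have h_sub : Tendsto (fun x => ν.real (Icc b c) - ν.real (Icc b x)) (𝓝[<] c) (𝓝 0) := by
    simpa only [sub_self] using h.const_sub (ν.real (Icc b c))
  refine (measureReal_eq_zero_iff).1 (le_antisymm (ge_of_tendsto h_sub ?_) measureReal_nonneg)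
  filter_upwards [Ico_mem_nhdsLT hbc] with x hx
  rw [← measureReal_Ioc_eq_sub hx.1 hx.2.le]
  exact measureReal_mono (singleton_subset_iff.2 ⟨hx.2, le_rfl⟩)

end GeneralLemmas

/-- The irrational numbers of `(0, 1)`: the set on which all iterates of the odd Gauss map, and
hence all digits of the odd continued fraction expansion, are given by the generic formulas. -/
def unitIrrationals : Set ℝ := Ioo 0 1 ∩ {y | Irrational y}

theorem measurableSet_unitIrrationals : MeasurableSet unitIrrationals :=
  measurableSet_Ioo.inter (countable_range ((↑) : ℚ → ℝ)).measurableSet.compl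

theorem Ioo_inter_unitIrrationals_ae_eq_Ioc {μ : Measure ℝ}
    (hμ : ∀ c ∈ Ioc (0 : ℝ) 1, μ {c} = 0) {b c : ℝ} (hb : 0 ≤ b) (hc : c ≤ 1) :
    (Ioo b c ∩ unitIrrationals : Set ℝ) =ᵐ[μ] Ioc b c := by
  have h_countable : (Ioc (0 : ℝ) 1 ∩ (range ((↑) : ℚ → ℝ) ∪ {c})).Countable :=
    ((countable_range _).union (countable_singleton c)).mono inter_subset_right
  have h_null : μ (Ioc (0 : ℝ) 1 ∩ (range ((↑) : ℚ → ℝ) ∪ {c})) = 0 := by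
    rw [← biUnion_of_singleton (Ioc (0 : ℝ) 1 ∩ _)]
    exact (measure_biUnion_null_iff h_countable).2 fun z hz => hμ z hz.1
  filter_upwards [measure_eq_zero_iff_ae_notMem.1 h_null] with z hz
  refine propext ⟨fun h => Ioo_subset_Ioc_self h.1, fun h => ?_⟩
  have hz01 : z ∈ Ioc (0 : ℝ) 1 := ⟨hb.trans_lt h.1, h.2.trans hc⟩
  have hz_irr : Irrational z := fun hq => hz ⟨hz01, .inl hq⟩
  have hzc : z < c := h.2.lt_of_ne fun hzc => hz ⟨hz01, .inr hzc⟩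
  exact ⟨⟨h.1, hzc⟩, ⟨hz01.1, hzc.trans_le hc⟩, hz_irr⟩

theorem measurable_T : Measurable T := by
  have h_inv : Measurable fun x : ℝ => 1 / x := by fun_prop
  have h_fract : Measurable fun x : ℝ => Int.fract (1 / x) := measurable_fract.comp h_inv
  have h_odd : MeasurableSet {x : ℝ | Odd ⌊1 / x⌋} :=
    (Int.measurable_floor.comp h_inv) (MeasurableSet.of_discrete (s := {k : ℤ | Odd k}))
  exact .ite (measurableSet_singleton 0) measurable_const (.ite h_odd h_fract (h_fract.const_sub 1))

theorem r_succ_of_ne_zero {y : ℝ} {n : ℕ} (hy : T^[n] y ≠ 0) : r y (n + 1) = 1 / T^[n] y := by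
  simp only [r, a, eps, Function.iterate_succ_apply']
  rw [T, if_neg hy]
  have := Int.floor_add_fract (1 / T^[n] y)
  split_ifs <;> push_cast <;> linarith

theorem T_one_div_of_mem_Ico_odd {w : ℝ} {m : ℕ} (hw : w ∈ Ico (2 * (m : ℝ) + 1) (2 * m + 2)) :
    T (1 / w) = w - (2 * m + 1) := by
  have hw0 : w ≠ 0 := (lt_of_lt_of_le (by positivity) hw.1).ne'
  have h_floor : ⌊w⌋ = 2 * (m : ℤ) + 1 := by
    rw [Int.floor_eq_iff]
    push_cast
    exact ⟨hw.1, by linarith [hw.2]⟩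
  rw [T, if_neg (one_div_ne_zero hw0), one_div_one_div, if_pos ⟨m, h_floor⟩, Int.fract, h_floor]
  push_cast
  ring

theorem T_one_div_of_mem_Ico_even {w : ℝ} {m : ℕ} (hw : w ∈ Ico (2 * (m : ℝ) + 2) (2 * m + 3)) :
    T (1 / w) = 2 * m + 3 - w := by
  have hw0 : w ≠ 0 := (lt_of_lt_of_le (by positivity) hw.1).ne'
  have h_floor : ⌊w⌋ = 2 * (m : ℤ) + 2 := by
    rw [Int.floor_eq_iff]
    push_cast
    exact ⟨hw.1, by linarith [hw.2]⟩
  have h_even : ¬Odd ⌊w⌋ := Int.not_odd_iff_even.2 ⟨m + 1, by rw [h_floor]; ring⟩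
  rw [T, if_neg (one_div_ne_zero hw0), one_div_one_div, if_neg h_even, Int.fract, h_floor]
  push_cast
  ring

theorem exists_mem_Ioo_odd_or_even_of_irrational {w : ℝ} (hw : Irrational w) (hw1 : 1 < w) :
    ∃ m : ℕ, w ∈ Ioo (2 * (m : ℝ) + 1) (2 * m + 2) ∨ w ∈ Ioo (2 * (m : ℝ) + 2) (2 * m + 3) := by
  have h_le : (⌊w⌋₊ : ℝ) ≤ w := Nat.floor_le (by linarith)
  have h_gt : (⌊w⌋₊ : ℝ) < w := h_le.lt_of_ne (hw.ne_nat _).symm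
  have h_lt : w < ⌊w⌋₊ + 1 := Nat.lt_floor_add_one w
  have h_pos : 1 ≤ ⌊w⌋₊ := Nat.le_floor (by exact_mod_cast hw1.le)
  obtain ⟨k, hk | hk⟩ := Nat.even_or_odd' ⌊w⌋₊
  · obtain ⟨m, rfl⟩ : ∃ m, k = m + 1 := ⟨k - 1, by omega⟩
    rw [hk] at h_gt h_lt
    push_cast at h_gt h_lt
    exact ⟨m, .inr ⟨by linarith, by linarith⟩⟩
  · rw [hk] at h_gt h_lt
    push_cast at h_gt h_lt
    exact ⟨k, .inl ⟨h_gt, by linarith⟩⟩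

theorem irrational_one_div_of_mem_unitIrrationals {z : ℝ} (hz : z ∈ unitIrrationals) :
    Irrational (1 / z) := by
  simpa only [one_div] using hz.2.inv

theorem exists_one_div_mem_Ioo_odd_or_even {z : ℝ} (hz : z ∈ unitIrrationals) :
    ∃ m : ℕ, 1 / z ∈ Ioo (2 * (m : ℝ) + 1) (2 * m + 2) ∨
      1 / z ∈ Ioo (2 * (m : ℝ) + 2) (2 * m + 3) :=
  exists_mem_Ioo_odd_or_even_of_irrational (irrational_one_div_of_mem_unitIrrationals hz)
    (one_lt_one_div hz.1.1 hz.1.2)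

theorem mapsTo_T_unitIrrationals : MapsTo T unitIrrationals unitIrrationals := by
  intro z hz
  have hw := irrational_one_div_of_mem_unitIrrationals hz
  rw [← one_div_one_div z]
  obtain ⟨m, hm | hm⟩ := exists_one_div_mem_Ioo_odd_or_even hz
  · rw [T_one_div_of_mem_Ico_odd (Ioo_subset_Ico_self hm)]
    exact ⟨⟨by linarith [hm.1], by linarith [hm.2]⟩, by exact_mod_cast hw.sub_natCast (2 * m + 1)⟩
  · rw [T_one_div_of_mem_Ico_even (Ioo_subset_Ico_self hm)]
    exact ⟨⟨by linarith [hm.2], by linarith [hm.1]⟩, by exact_mod_cast hw.natCast_sub (2 * m + 3)⟩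

theorem one_div_r_succ {y : ℝ} (hy : y ∈ unitIrrationals) (n : ℕ) :
    1 / r y (n + 1) = T^[n] y := by
  rw [r_succ_of_ne_zero (mapsTo_T_unitIrrationals.iterate n hy).1.1.ne', one_div_one_div]

/-- The part of `{T < x}` coming from `1 / z` lying above the odd integer `2m + 1` or below the odd
integer `2m + 3`. These are the branches `(i, ε) = (2m + 1, 1)` and `(2m + 3, -1)`; pairing them in
this way makes the pieces for different `m` lie in the consecutive intervals
`(1 / (2m + 3), 1 / (2m + 1))`. -/
def branchPiece (x : ℝ) (m : ℕ) : Set ℝ :=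
  Ioo (1 / (2 * (m : ℝ) + 1 + x)) (1 / (2 * m + 1)) ∪
    Ioo (1 / (2 * (m : ℝ) + 3)) (1 / (2 * m + 3 - x))

theorem measurableSet_branchPiece (x : ℝ) (m : ℕ) : MeasurableSet (branchPiece x m) :=
  measurableSet_Ioo.union measurableSet_Ioo

section BranchPiece

variable {x : ℝ}

theorem mem_branchPiece_iff (hx : x ∈ Icc (0 : ℝ) 1) {z : ℝ} (hz : 0 < z) (m : ℕ) :
    z ∈ branchPiece x m ↔ 1 / z ∈ Ioo (2 * (m : ℝ) + 1) (2 * m + 1 + x) ∨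
      1 / z ∈ Ioo (2 * (m : ℝ) + 3 - x) (2 * m + 3) := by
  have : (0 : ℝ) ≤ m := m.cast_nonneg
  rw [branchPiece, mem_union,
    mem_Ioo_one_div_iff (by linarith [hx.1]) (by linarith [hx.1]) hz,
    mem_Ioo_one_div_iff (by linarith [hx.2]) (by linarith [hx.2]) hz]

theorem T_lt_iff_mem_iUnion_branchPiece (hx : x ∈ Icc (0 : ℝ) 1) {z : ℝ}
    (hz : z ∈ unitIrrationals) : T z < x ↔ z ∈ ⋃ m, branchPiece x m := by
  simp only [mem_iUnion, mem_branchPiece_iff hx hz.1.1]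
  rw [← one_div_one_div z, one_div_one_div (1 / z)]
  constructor
  · intro hTx
    obtain ⟨m, hm | hm⟩ := exists_one_div_mem_Ioo_odd_or_even hz
    · rw [T_one_div_of_mem_Ico_odd (Ioo_subset_Ico_self hm)] at hTx
      exact ⟨m, .inl ⟨hm.1, by linarith⟩⟩
    · rw [T_one_div_of_mem_Ico_even (Ioo_subset_Ico_self hm)] at hTx
      exact ⟨m, .inr ⟨by linarith, hm.2⟩⟩
  · rintro ⟨m, hm | hm⟩
    · rw [T_one_div_of_mem_Ico_odd ⟨hm.1.le, by linarith [hm.2, hx.2]⟩]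
      linarith [hm.2]
    · rw [T_one_div_of_mem_Ico_even ⟨by linarith [hm.1, hx.2], hm.2⟩]
      linarith [hm.1]

theorem branchPiece_subset (hx : x ∈ Icc (0 : ℝ) 1) (m : ℕ) :
    branchPiece x m ⊆ Ioo (1 / (2 * (m : ℝ) + 3)) (1 / (2 * m + 1)) := by
  have : (0 : ℝ) ≤ m := m.cast_nonneg
  apply union_subset
  · exact Ioo_subset_Ioo_left (one_div_le_one_div_of_le (by linarith [hx.1]) (by linarith [hx.2]))
  · exact Ioo_subset_Ioo_right (one_div_le_one_div_of_le (by linarith) (by linarith [hx.2]))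

theorem pairwise_disjoint_branchPiece (hx : x ∈ Icc (0 : ℝ) 1) :
    Pairwise (Function.onFun Disjoint (branchPiece x)) := by
  have h_anti : Antitone fun m : ℕ => 1 / (2 * (m : ℝ) + 1) := by
    intro m k hmk
    dsimp only
    gcongr
  refine h_anti.pairwise_disjoint_on_Ioo_succ.mono fun m k hmk => ?_
  have h_subset : ∀ j : ℕ, branchPiece x j ⊆
      Ioo (1 / (2 * ((Order.succ j : ℕ) : ℝ) + 1)) (1 / (2 * (j : ℝ) + 1)) := by
    intro j
    convert branchPiece_subset hx j using 3
    rw [Nat.succ_eq_succ, Nat.cast_succ]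
    ring
  exact hmk.mono (h_subset m) (h_subset k)

theorem measureReal_branchPiece (hx : x ∈ Icc (0 : ℝ) 1) (ν : Measure ℝ) [IsFiniteMeasure ν]
    (m : ℕ) : ν.real (branchPiece x m) =
      ν.real (Ioo (1 / (2 * (m : ℝ) + 1 + x)) (1 / (2 * m + 1))) +
        ν.real (Ioo (1 / (2 * (m : ℝ) + 3)) (1 / (2 * m + 3 - x))) := by
  have : (0 : ℝ) ≤ m := m.cast_nonneg
  have h_le : 1 / (2 * (m : ℝ) + 3 - x) ≤ 1 / (2 * m + 1 + x) :=
    one_div_le_one_div_of_le (by linarith [hx.1]) (by linarith [hx.2])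
  refine measureReal_union (disjoint_left.2 fun z hz hz' => ?_) measurableSet_Ioo
  exact (hz.1.trans hz'.2).not_ge h_le

end BranchPiece

/-- The law of `Tⁿ y` when `y` is distributed according to `μ`, discarding the mass of `μ` outside
the irrationals of `(0, 1)`. -/
noncomputable def orbitLaw (μ : Measure ℝ) (n : ℕ) : Measure ℝ :=
  (μ.restrict unitIrrationals).map T^[n]

section OrbitLaw

variable (μ : Measure ℝ) (n : ℕ)

instance [IsFiniteMeasure μ] : IsFiniteMeasure (orbitLaw μ n) := by
  unfold orbitLaw
  infer_instance

theorem orbitLaw_zero : orbitLaw μ 0 = μ.restrict unitIrrationals := by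
  rw [orbitLaw, Function.iterate_zero, Measure.map_id]

theorem orbitLaw_succ : orbitLaw μ (n + 1) = (orbitLaw μ n).map T := by
  rw [orbitLaw, orbitLaw, Measure.map_map measurable_T (measurable_T.iterate n),
    Function.iterate_succ']

theorem ae_orbitLaw_mem_unitIrrationals : ∀ᵐ y ∂orbitLaw μ n, y ∈ unitIrrationals := by
  refine (ae_map_iff (measurable_T.iterate n).aemeasurable measurableSet_unitIrrationals).2 ?_
  filter_upwards [ae_restrict_mem measurableSet_unitIrrationals] with y hy
  exact mapsTo_T_unitIrrationals.iterate n hy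

theorem H_succ_eq_orbitLaw_real_Iio (x : ℝ) :
    H μ (n + 1) x = (orbitLaw μ (n + 1)).real (Iio x) := by
  have hT := measurable_T.iterate (n + 1)
  rw [orbitLaw, map_measureReal_apply hT measurableSet_Iio,
    measureReal_restrict_apply (hT measurableSet_Iio)]
  change μ.real _ = _
  congr 1
  ext y
  constructor
  · rintro ⟨hy1, hy2, hyx⟩
    exact ⟨(one_div_r_succ ⟨hy1, hy2⟩ (n + 1)).symm.trans_lt hyx, hy1, hy2⟩
  · rintro ⟨hyx, hy⟩
    exact ⟨hy.1, hy.2, (one_div_r_succ hy (n + 1)).trans_lt hyx⟩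

end OrbitLaw

section Recursion

variable {μ : Measure ℝ} [IsFiniteMeasure μ] {n : ℕ}

theorem measure_singleton_eq_zero_of_continuousOn_H_zero (hH : ContinuousOn (H μ 0) (Icc 0 1))
    {c : ℝ} (hc : c ∈ Ioc (0 : ℝ) 1) : μ {c} = 0 := by
  refine measure_singleton_eq_zero_of_tendsto_Icc hc.1 ?_
  exact (hH c (Ioc_subset_Icc_self hc)).mono_of_mem_nhdsWithin (Icc_mem_nhdsLT_of_mem hc)

theorem orbitLaw_singleton_eq_zero_of_continuousOn_H_succ
    (hH : ContinuousOn (H μ (n + 1)) (Icc 0 1)) {c : ℝ} (hc : c ∈ Ico (0 : ℝ) 1) :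
    orbitLaw μ (n + 1) {c} = 0 := by
  refine measure_singleton_eq_zero_of_tendsto_Iio ?_
  simp only [← H_succ_eq_orbitLaw_real_Iio]
  exact (hH c (Ico_subset_Icc_self hc)).mono_of_mem_nhdsWithin (Icc_mem_nhdsGT_of_mem hc)

theorem orbitLaw_real_Ioo (hH : ContinuousOn (H μ n) (Icc 0 1)) {b c : ℝ} (hb : 0 ≤ b)
    (hbc : b ≤ c) (hc : c ≤ 1) : (orbitLaw μ n).real (Ioo b c) = H μ n c - H μ n b := by
  cases n with
  | zero =>
    have hμ : ∀ t ∈ Ioc (0 : ℝ) 1, μ {t} = 0 := fun t =>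
      measure_singleton_eq_zero_of_continuousOn_H_zero hH
    rw [orbitLaw_zero, measureReal_restrict_apply measurableSet_Ioo,
      measureReal_congr (Ioo_inter_unitIrrationals_ae_eq_Ioc hμ hb hc),
      measureReal_Ioc_eq_sub hb hbc]
    rfl
  | succ n =>
    rcases hbc.eq_or_lt with rfl | hbc'
    · simp
    have hb0 := orbitLaw_singleton_eq_zero_of_continuousOn_H_succ hH ⟨hb, hbc'.trans_le hc⟩
    rw [measureReal_congr (Ioo_ae_eq_Ico' hb0), measureReal_Ico_eq_sub hbc,
      H_succ_eq_orbitLaw_real_Iio, H_succ_eq_orbitLaw_real_Iio]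

/-- The total increment of `F` over the two intervals that make up `branchPiece x m`. -/
noncomputable def branchIncrement (F : ℝ → ℝ) (m : ℕ) (x : ℝ) : ℝ :=
  (F (1 / (2 * m + 1)) - F (1 / (2 * m + 1 + x))) + (F (1 / (2 * m + 3 - x)) - F (1 / (2 * m + 3)))

theorem hasSum_branchIncrement_H (hH : ContinuousOn (H μ n) (Icc 0 1)) {x : ℝ}
    (hx : x ∈ Icc (0 : ℝ) 1) :
    HasSum (fun m => branchIncrement (H μ n) m x) (H μ (n + 1) x) := by
  have h_preimage : T ⁻¹' Iio x =ᵐ[orbitLaw μ n] ⋃ m, branchPiece x m := by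
    filter_upwards [ae_orbitLaw_mem_unitIrrationals μ n] with z hz
    exact propext (T_lt_iff_mem_iUnion_branchPiece hx hz)
  have h_piece : ∀ m, (orbitLaw μ n).real (branchPiece x m) = branchIncrement (H μ n) m x := by
    intro m
    have : (0 : ℝ) ≤ m := m.cast_nonneg
    rw [measureReal_branchPiece hx,
      orbitLaw_real_Ioo hH (one_div_mem_Icc_zero_one (by linarith [hx.1])).1
        (one_div_le_one_div_of_le (by linarith) (by linarith [hx.1]))
        (one_div_mem_Icc_zero_one (by linarith)).2,
      orbitLaw_real_Ioo hH (one_div_mem_Icc_zero_one (by linarith)).1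
        (one_div_le_one_div_of_le (by linarith [hx.2]) (by linarith [hx.1]))
        (one_div_mem_Icc_zero_one (by linarith [hx.2])).2, branchIncrement]
  rw [H_succ_eq_orbitLaw_real_Iio, orbitLaw_succ,
    map_measureReal_apply measurable_T measurableSet_Iio, measureReal_congr h_preimage]
  simp only [← h_piece]
  exact hasSum_measureReal_iUnion (measurableSet_branchPiece x) (pairwise_disjoint_branchPiece hx)

end Recursion

section TransferOperator

/-- The contribution of the branches `(i, ε) = (2m + 1, 1)` and `(2m + 3, -1)` to
`transferOperator`. -/
noncomputable def transferTerm (f : ℝ → ℝ) (m : ℕ) (x : ℝ) : ℝ :=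
  1 / (2 * (m : ℝ) + 1 + x) ^ 2 * f (1 / (2 * m + 1 + x)) +
    1 / (2 * (m : ℝ) + 3 - x) ^ 2 * f (1 / (2 * m + 3 - x))

/-- The Perron–Frobenius operator of the odd Gauss map, `f ↦ ∑ (i + εx)⁻² f(1 / (i + εx))`. The sum
over `(i, ε)` with `i` odd, `ε = ±1` and `i + ε > 1` is encoded as a sum over `m` of the pairs of
branches `(2m + 1, 1)` and `(2m + 3, -1)`. -/
noncomputable def transferOperator (f : ℝ → ℝ) (x : ℝ) : ℝ :=
  ∑' m, transferTerm f m x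

variable {F f : ℝ → ℝ} {x C : ℝ}

theorem hasDerivWithinAt_branchIncrement
    (hF : ∀ y ∈ Icc (0 : ℝ) 1, HasDerivWithinAt F (f y) (Icc 0 1) y) (m : ℕ)
    (hx : x ∈ Icc (0 : ℝ) 1) :
    HasDerivWithinAt (branchIncrement F m) (transferTerm f m x) (Icc 0 1) x := by
  have : (0 : ℝ) ≤ m := m.cast_nonneg
  have h_upper : MapsTo (fun y : ℝ => 1 / (2 * m + 1 + y)) (Icc 0 1) (Icc 0 1) := fun y hy =>
    one_div_mem_Icc_zero_one (by linarith [hy.1])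
  have h_lower : MapsTo (fun y : ℝ => 1 / (2 * m + 3 - y)) (Icc 0 1) (Icc 0 1) := fun y hy =>
    one_div_mem_Icc_zero_one (by linarith [hy.2])
  have h_deriv_upper := hasDerivWithinAt_comp_one_div (hF _ (h_upper hx))
    ((hasDerivAt_id' x).hasDerivWithinAt.const_add (2 * (m : ℝ) + 1)) (by linarith [hx.1]) h_upper
  have h_deriv_lower := hasDerivWithinAt_comp_one_div (hF _ (h_lower hx))
    ((hasDerivAt_id' x).hasDerivWithinAt.const_sub (2 * (m : ℝ) + 3)) (by linarith [hx.2]) h_lower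
  refine ((h_deriv_upper.const_sub _).add (h_deriv_lower.sub_const _)).congr_deriv ?_
  rw [transferTerm]
  ring

theorem abs_transferTerm_le (hf : ∀ y ∈ Icc (0 : ℝ) 1, |f y| ≤ C) (m : ℕ)
    (hx : x ∈ Icc (0 : ℝ) 1) : |transferTerm f m x| ≤ 2 * C * (1 / ((m : ℝ) + 1) ^ 2) := by
  have : (0 : ℝ) ≤ m := m.cast_nonneg
  have hC : 0 ≤ C := (abs_nonneg _).trans (hf x hx)
  have h_branch : ∀ t : ℝ, (m : ℝ) + 1 ≤ t →
      |1 / t ^ 2 * f (1 / t)| ≤ C * (1 / ((m : ℝ) + 1) ^ 2) := by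
    intro t ht
    rw [abs_mul, abs_of_nonneg (by positivity), mul_comm]
    gcongr
    exact hf _ (one_div_mem_Icc_zero_one (by linarith))
  calc |transferTerm f m x|
      ≤ C * (1 / ((m : ℝ) + 1) ^ 2) + C * (1 / ((m : ℝ) + 1) ^ 2) :=
        (abs_add_le _ _).trans (add_le_add (h_branch _ (by linarith [hx.1]))
          (h_branch _ (by linarith [hx.2])))
    _ = 2 * C * (1 / ((m : ℝ) + 1) ^ 2) := by ring

theorem summable_const_mul_one_div_add_one_sq (C : ℝ) :
    Summable fun m : ℕ => C * (1 / ((m : ℝ) + 1) ^ 2) := by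
  refine .mul_left C ?_
  exact_mod_cast (summable_nat_add_iff 1).2 (Real.summable_one_div_nat_pow.2 one_lt_two)

theorem abs_transferOperator_le (hf : ∀ y ∈ Icc (0 : ℝ) 1, |f y| ≤ C) (hx : x ∈ Icc (0 : ℝ) 1) :
    |transferOperator f x| ≤ ∑' m : ℕ, 2 * C * (1 / ((m : ℝ) + 1) ^ 2) :=
  tsum_of_norm_bounded (f := fun m => transferTerm f m x)
    (summable_const_mul_one_div_add_one_sq (2 * C)).hasSum fun m => abs_transferTerm_le hf m hx

theorem hasDerivWithinAt_H_succ {μ : Measure ℝ} [IsFiniteMeasure μ] {n : ℕ}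
    (hdiff : DifferentiableOn ℝ (H μ n) (Icc 0 1))
    (hbd : ∀ y ∈ Icc (0 : ℝ) 1, |derivWithin (H μ n) (Icc 0 1) y| ≤ C) (hx : x ∈ Icc (0 : ℝ) 1) :
    HasDerivWithinAt (H μ (n + 1)) (transferOperator (derivWithin (H μ n) (Icc 0 1)) x)
      (Icc 0 1) x :=
  hasDerivWithinAt_of_hasSum (convex_Icc 0 1) (summable_const_mul_one_div_add_one_sq (2 * C))
    (fun m _ hy =>
      hasDerivWithinAt_branchIncrement (fun y hy => (hdiff y hy).hasDerivWithinAt) m hy)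
    (fun m _ hy => abs_transferTerm_le hbd m hy)
    (fun _ hy => hasSum_branchIncrement_H hdiff.continuousOn hy) hx

theorem derivWithin_H_succ {μ : Measure ℝ} [IsFiniteMeasure μ] {n : ℕ}
    (hdiff : DifferentiableOn ℝ (H μ n) (Icc 0 1))
    (hbd : ∀ y ∈ Icc (0 : ℝ) 1, |derivWithin (H μ n) (Icc 0 1) y| ≤ C) (hx : x ∈ Icc (0 : ℝ) 1) :
    derivWithin (H μ (n + 1)) (Icc 0 1) x =
      transferOperator (derivWithin (H μ n) (Icc 0 1)) x :=
  (hasDerivWithinAt_H_succ hdiff hbd hx).derivWithin (uniqueDiffOn_Icc zero_lt_one x hx)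

end TransferOperator

end OCF

theorem ocf_gauss_kuzmin_derivative_general (μ : Measure ℝ) [IsFiniteMeasure μ] (p : ℕ)
    (hdiff : DifferentiableOn ℝ (H μ p) (Icc 0 1))
    (hbd : ∃ C : ℝ, ∀ x ∈ Icc (0 : ℝ) 1, |derivWithin (H μ p) (Icc 0 1) x| ≤ C) :
    ∀ n : ℕ, p ≤ n →
      DifferentiableOn ℝ (H μ n) (Icc 0 1) ∧
      (∃ C : ℝ, ∀ x ∈ Icc (0 : ℝ) 1, |derivWithin (H μ n) (Icc 0 1) x| ≤ C) ∧
      ∀ x ∈ Icc (0 : ℝ) 1, derivWithin (H μ (n + 1)) (Icc 0 1) x =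
        transferOperator (derivWithin (H μ n) (Icc 0 1)) x := by
  intro n hn
  induction n, hn using Nat.le_induction with
  | base =>
    obtain ⟨C, hC⟩ := hbd
    exact ⟨hdiff, ⟨C, hC⟩, fun x hx => derivWithin_H_succ hdiff hC hx⟩
  | succ n _ ih =>
    obtain ⟨hdiff_n, ⟨C, hC⟩, h_deriv⟩ := ih
    have hdiff_succ : DifferentiableOn ℝ (H μ (n + 1)) (Icc 0 1) := fun x hx =>
      (hasDerivWithinAt_H_succ hdiff_n hC hx).differentiableWithinAt
    have hbd_succ : ∀ x ∈ Icc (0 : ℝ) 1, |derivWithin (H μ (n + 1)) (Icc 0 1) x| ≤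
        ∑' m : ℕ, 2 * C * (1 / ((m : ℝ) + 1) ^ 2) := fun x hx =>
      h_deriv x hx ▸ abs_transferOperator_le hC hx
    exact ⟨hdiff_succ, ⟨_, hbd_succ⟩, fun x hx => derivWithin_H_succ hdiff_succ hbd_succ hx⟩

/-- If for some `p ≥ 0` the derivative `H_p'` exists everywhere on `[0,1]` and is bounded, then
for every `n ≥ p` the derivative `H_n'` exists everywhere on `[0,1]`, is bounded, and satisfies
`H_{n+1}'(x) = Σ_{(i,ε)} (i+εx)⁻² H_n'(1/(i+εx))`, the sum running over odd positive `i` and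
`ε = ±1` with `i + ε > 1`. -/
theorem ocf_gauss_kuzmin_derivative (μ : Measure ℝ) [IsProbabilityMeasure μ] [NullSingletonClass μ]
    (hμ : μ (Set.Icc (0 : ℝ) 1)ᶜ = 0) (p : ℕ)
    (hdiff : ∀ x ∈ Set.Icc (0 : ℝ) 1, DifferentiableWithinAt ℝ (H μ p) (Set.Icc 0 1) x)
    (hbd : ∃ C : ℝ, ∀ x ∈ Set.Icc (0 : ℝ) 1, |derivWithin (H μ p) (Set.Icc 0 1) x| ≤ C) :
    ∀ n : ℕ, p ≤ n →
      (∀ x ∈ Set.Icc (0 : ℝ) 1, DifferentiableWithinAt ℝ (H μ n) (Set.Icc 0 1) x) ∧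
      (∃ C : ℝ, ∀ x ∈ Set.Icc (0 : ℝ) 1, |derivWithin (H μ n) (Set.Icc 0 1) x| ≤ C) ∧
      ∀ x ∈ Set.Icc (0 : ℝ) 1,
        derivWithin (H μ (n + 1)) (Set.Icc 0 1) x =
          ∑' m : ℕ,
            ((1 / (2 * (m : ℝ) + 1 + x) ^ 2) *
                derivWithin (H μ n) (Set.Icc 0 1) (1 / (2 * (m : ℝ) + 1 + x))
              + (1 / (2 * (m : ℝ) + 3 - x) ^ 2) *
                derivWithin (H μ n) (Set.Icc 0 1) (1 / (2 * (m : ℝ) + 3 - x))) :=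
  ocf_gauss_kuzmin_derivative_general μ p hdiff hbd
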